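/- Under Assumption 1, let the disturbance set satisfy D ⊆ ∪_{i=1}^{n_D} D_i with each D_i = {d : d̲^i ≤ d ≤ d̄^i}, d̲^i ≥ 0, and let {I_q}_{q∈Q} be a box partition of X with projection π : X → Q defined by x ∈ I_{π(x)}. Define transitions of the CM-induced finite state abstraction by: (q, s, q') is a transition iff I_{q'} ∩ P̄ost(cl(I_q), s) ≠ ∅, where P̄ost(cl(I_q), s) = ∪_{i=1}^{n_D} { x' : F_l(ξ̲^l, s, d̲^i) ≤ x'_l ≤ F_l(ξ̄^l, s, d̄^i) for all l } with ξ̲^l, ξ̄^l built from the corners x̲_q, x̄_q of cl(I_q) by ξ̲^l_k = x̲_{q,k}, ξ̄^l_k = x̄_{q,k} for k ∈ L^down_l ∪ L^up_l and ξ̲^l_k = x̄_{q,k}, ξ̄^l_k = x̲_{q,k} for k ∈ L^adj_l. Then the abstraction simulates the traffic dynamics: for every x ∈ X, every signal input s, and every d ∈ D, letting x' = F(x, s, d), the triple (π(x), s, π(x')) is a transition of the abstraction. -/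

import Mathlib

open Finset
open scoped Classical

/-- Outflow `f^out_l(x, s)` of link `l` under signal `s`. -/
noncomputable def fout {L : Type*} [Fintype L]
    (c xcap : L → ℝ) (β α : L → L → ℝ) (s : Finset L)
    (x : L → ℝ) (l : L) : ℝ :=
  if l ∈ s then
    (Finset.univ.filter fun k => 0 < β l k).fold min (min (x l) (c l))
      fun k => α l k / β l k * (xcap k - x k)
  else 0

/-- Queue update `F_l(x, s, d)`, with `L^up_l = {j : η j = τ l}`. -/
noncomputable def Fupd {L V : Type*} [Fintype L]
    (η : L → V) (τ : L → Option V)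
    (c xcap : L → ℝ) (β α : L → L → ℝ) (s : Finset L)
    (x d : L → ℝ) (l : L) : ℝ :=
  min (xcap l)
    (x l - fout c xcap β α s x l
      + ∑ j ∈ Finset.univ.filter (fun j => τ l = some (η j)), β j l * fout c xcap β α s x j
      + d l)

theorem le_fout_iff {L : Type*} [Fintype L]
    (c xcap : L → ℝ) (β α : L → L → ℝ) (s : Finset L)
    (x : L → ℝ) (l : L) (hl : l ∈ s) (a : ℝ) :
    a ≤ fout c xcap β α s x l ↔ (a ≤ x l ∧ a ≤ c l) ∧
      ∀ k, 0 < β l k → a ≤ α l k / β l k * (xcap k - x k) := by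
  unfold fout
  rw [if_pos hl, Finset.le_fold_min, le_min_iff]
  simp

theorem fupd_mono {L V : Type*} [Fintype L]
    (η : L → V) (τ : L → Option V) (hself : ∀ l, some (η l) ≠ τ l)
    (c xcap : L → ℝ)
    (β : L → L → ℝ) (hβ : ∀ l k, 0 ≤ β l k)
    (hβsupp : ∀ l k, 0 < β l k → τ k = some (η l))
    (s : Finset L) (α : L → L → ℝ) (hα : ∀ l k, 0 < α l k)
    (hαsum : ∀ k, (Finset.univ.filter fun j => j ∈ s ∧ some (η j) = τ k).Nonempty →
      ∑ j ∈ Finset.univ.filter (fun j => j ∈ s ∧ some (η j) = τ k), α j k = 1)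
    (hA1 : ∀ l k, τ l = some (η k) → 0 < β k l → c l ≤ xcap l - β k l / α k l * c k)
    (l : L) (x y d e : L → ℝ) (hde : d l ≤ e l)
    (hadj : ∀ k, k ≠ l → τ k = τ l → y k ≤ x k)
    (hnadj : ∀ k, ¬ (k ≠ l ∧ τ k = τ l) → x k ≤ y k) :
    Fupd η τ c xcap β α s x d l ≤ Fupd η τ c xcap β α s y e l := by
  have hxl : x l ≤ y l := hnadj l (by simp)
  obtain ⟨m, hm⟩ : ∃ m, m = max 0 (y l - max (x l) (c l)) := ⟨_, rfl⟩
  have hm0 : 0 ≤ m := hm ▸ le_max_left _ _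
  -- own outflow
  have hown : x l - fout c xcap β α s x l + m ≤ y l - fout c xcap β α s y l := by
    by_cases hl : l ∈ s
    · obtain ⟨⟨h1, h2⟩, h3⟩ := (le_fout_iff c xcap β α s y l hl _).1 le_rfl
      have key : min (x l) (fout c xcap β α s y l) ≤ fout c xcap β α s x l := by
        rw [le_fout_iff c xcap β α s x l hl]
        refine ⟨⟨min_le_left _ _, (min_le_right _ _).trans h2⟩, fun k hk => ?_⟩
        refine (min_le_right _ _).trans ((h3 k hk).trans ?_)
        have hxk : x k ≤ y k := by
          apply hnadj
          rintro ⟨-, h⟩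
          exact hself l ((hβsupp l k hk).symm.trans h)
        have := div_pos (hα l k) hk
        gcongr
      grind
    · have h1 : ∀ z, fout c xcap β α s z l = 0 := fun z => by simp [fout, hl]
      rw [h1, h1]
      grind
  -- inflow
  have hin : ∀ j ∈ Finset.univ.filter (fun j => τ l = some (η j)),
      β j l * fout c xcap β α s x j ≤
        β j l * fout c xcap β α s y j + (if j ∈ s then α j l else 0) * m := by
    intro j hj
    have hj' : τ l = some (η j) := by simpa using hj
    by_cases hjs : j ∈ s
    · rw [if_pos hjs]
      rcases (hβ j l).eq_or_lt with h0 | h0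
      · rw [← h0]
        have := mul_nonneg (hα j l).le hm0
        linarith
      · have hr := div_pos (hα j l) h0
        have hrm := mul_nonneg hr.le hm0
        obtain ⟨⟨h1, h2⟩, h3⟩ := (le_fout_iff c xcap β α s x j hjs _).1 le_rfl
        have key : fout c xcap β α s x j - α j l / β j l * m ≤ fout c xcap β α s y j := by
          rw [le_fout_iff c xcap β α s y j hjs]
          refine ⟨⟨?_, by linarith⟩, fun k hk => ?_⟩
          · have : x j ≤ y j := by
              apply hnadj
              rintro ⟨-, h⟩
              exact hself j (hj'.symm.trans h.symm)
            linarith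
          · by_cases hkl : k = l
            · subst hkl
              have hA : c j ≤ α j k / β j k * (xcap k - c k) := by
                have h4 : β j k / α j k * c j ≤ xcap k - c k := by
                  linarith [hA1 k j hj' h0]
                have h5 := mul_le_mul_of_nonneg_left h4 hr.le
                have h6 : α j k / β j k * (β j k / α j k * c j) = c j := by
                  have := (hα j k).ne'
                  have := h0.ne'
                  field_simp
                linarith
              have h7 := h3 k hk
              rcases le_total (y k) (c k) with hy | hy
              · have : α j k / β j k * (xcap k - c k) ≤ α j k / β j k * (xcap k - y k) := by
                  gcongr
                linarith
              · have hme : m = y k - max (x k) (c k) := by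
                  rw [hm]
                  exact max_eq_right (sub_nonneg.2 (max_le hxl hy))
                rw [hme]
                rcases le_total (x k) (c k) with hx | hx
                · rw [max_eq_right hx]
                  linarith
                · rw [max_eq_left hx]
                  linarith
            · have hyk := hadj k hkl ((hβsupp j k hk).trans hj'.symm)
              have := div_pos (hα j k) hk
              have : α j k / β j k * (xcap k - x k) ≤ α j k / β j k * (xcap k - y k) := by
                gcongr
              linarith [h3 k hk]
        have h8 := mul_le_mul_of_nonneg_left key h0.le
        have h9 : β j l * (α j l / β j l * m) = α j l * m := by
          have := h0.ne'
          field_simp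
        linarith
    · simp [fout, hjs]
  have hsum := Finset.sum_le_sum hin
  rw [Finset.sum_add_distrib, ← Finset.sum_mul] at hsum
  have hα1 : ∑ j ∈ Finset.univ.filter (fun j => τ l = some (η j)),
      (if j ∈ s then α j l else 0) ≤ 1 := by
    rw [← Finset.sum_filter, Finset.filter_filter]
    have hset : Finset.univ.filter (fun j => τ l = some (η j) ∧ j ∈ s)
        = Finset.univ.filter (fun j => j ∈ s ∧ some (η j) = τ l) := by
      ext j
      simp only [Finset.mem_filter, Finset.mem_univ, true_and]
      exact ⟨fun h => ⟨h.2, h.1.symm⟩, fun h => ⟨h.2.symm, h.1⟩⟩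
    rw [hset]
    rcases Finset.eq_empty_or_nonempty
      (Finset.univ.filter (fun j => j ∈ s ∧ some (η j) = τ l)) with h | h
    · rw [h]
      simp
    · exact (hαsum l h).le
  have hα2 := mul_le_mul_of_nonneg_right hα1 hm0
  unfold Fupd
  apply min_le_min le_rfl
  linarith

/-- Under Assumption 1, the CM-induced finite state abstraction
simulates the traffic dynamics: for every `x ∈ X`, signal `s` and disturbance `d ∈ D`,
letting `x' = F(x, s, d)`, the triple `(π x, s, π x')` is a transition of the
abstraction, i.e. `I (π x') ∩ P̄ost(cl(I (π x)), s) ≠ ∅`. -/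
theorem cm_abstraction_simulates {L V : Type*} [Fintype L]
    (η : L → V) (τ : L → Option V) (hself : ∀ l, some (η l) ≠ τ l)
    (c xcap : L → ℝ) (hc : ∀ l, 0 < c l) (hcap : ∀ l, 0 < xcap l)
    (β : L → L → ℝ) (hβ : ∀ l k, 0 ≤ β l k)
    (hβsupp : ∀ l k, 0 < β l k → τ k = some (η l))
    (hβsum : ∀ l, ∑ k ∈ Finset.univ.filter (fun k => τ k = some (η l)), β l k ≤ 1)
    (s : Finset L) (α : L → L → ℝ) (hα : ∀ l k, 0 < α l k)
    (hαsum : ∀ k, (Finset.univ.filter fun j => j ∈ s ∧ some (η j) = τ k).Nonempty →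
      ∑ j ∈ Finset.univ.filter (fun j => j ∈ s ∧ some (η j) = τ k), α j k = 1)
    (hA1 : ∀ l k, τ l = some (η k) → 0 < β k l → c l ≤ xcap l - β k l / α k l * c k)
    (Q : Type*) [Fintype Q] (I : Q → Set (L → ℝ)) (lo hi : Q → L → ℝ)
    (hne : ∀ q, (I q).Nonempty)
    (hsub : ∀ q, I q ⊆ Set.Icc (lo q) (hi q))
    (hcl : ∀ q, closure (I q) = Set.Icc (lo q) (hi q))
    (hcover : (⋃ q, I q) = Set.Icc (0 : L → ℝ) xcap)
    (hdisj : ∀ q q', q ≠ q' → Disjoint (I q) (I q'))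
    (π : (L → ℝ) → Q) (hπ : ∀ x ∈ Set.Icc (0 : L → ℝ) xcap, x ∈ I (π x))
    (nD : ℕ) (dlo dhi : Fin nD → L → ℝ)
    (hdlo : ∀ i l, 0 ≤ dlo i l) (hdbox : ∀ i, dlo i ≤ dhi i)
    (D : Set (L → ℝ)) (hD : D ⊆ ⋃ i : Fin nD, Set.Icc (dlo i) (dhi i)) :
    ∀ x ∈ Set.Icc (0 : L → ℝ) xcap, ∀ d ∈ D,
      (I (π (Fupd η τ c xcap β α s x d)) ∩
        ⋃ i : Fin nD, {x' : L → ℝ | ∀ l,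
          Fupd η τ c xcap β α s
              (fun k => if k ≠ l ∧ τ k = τ l then hi (π x) k else lo (π x) k)
              (dlo i) l ≤ x' l ∧
          x' l ≤ Fupd η τ c xcap β α s
              (fun k => if k ≠ l ∧ τ k = τ l then lo (π x) k else hi (π x) k)
              (dhi i) l}).Nonempty := by
  intro x hx d hd
  obtain ⟨i, hi'⟩ := Set.mem_iUnion.1 (hD hd)
  have hbox := hsub _ (hπ x hx)
  have hfnn : ∀ j, 0 ≤ fout c xcap β α s x j := by
    intro j
    by_cases hj : j ∈ s
    · rw [le_fout_iff c xcap β α s x j hj]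
      exact ⟨⟨hx.1 j, (hc j).le⟩, fun k hk =>
        mul_nonneg (div_pos (hα j k) hk).le (sub_nonneg.2 (hx.2 k))⟩
    · simp [fout, hj]
  have hfle : ∀ j, fout c xcap β α s x j ≤ x j := by
    intro j
    by_cases hj : j ∈ s
    · exact ((le_fout_iff c xcap β α s x j hj _).1 le_rfl).1.1
    · simpa [fout, hj] using hx.1 j
  have hX : Fupd η τ c xcap β α s x d ∈ Set.Icc (0 : L → ℝ) xcap := by
    refine ⟨fun l => ?_, fun l => min_le_left _ _⟩
    refine le_min (hcap l).le ?_
    have h1 : 0 ≤ ∑ j ∈ Finset.univ.filter (fun j => τ l = some (η j)),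
        β j l * fout c xcap β α s x j :=
      Finset.sum_nonneg fun j _ => mul_nonneg (hβ j l) (hfnn j)
    have h2 := hi'.1 l
    have h3 := hdlo i l
    have h4 := hfle l
    simp only [Pi.zero_apply]
    linarith
  refine ⟨_, hπ _ hX, Set.mem_iUnion.2 ⟨i, fun l => ⟨?_, ?_⟩⟩⟩
  · apply fupd_mono η τ hself c xcap β hβ hβsupp s α hα hαsum hA1 l _ _ _ _ (hi'.1 l)
    · intro k h1 h2
      simpa [h1, h2] using hbox.2 k
    · intro k h
      simpa only [if_neg h] using hbox.1 k
  · apply fupd_mono η τ hself c xcap β hβ hβsupp s α hα hαsum hA1 l _ _ _ _ (hi'.2 l)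
    · intro k h1 h2
      simpa [h1, h2] using hbox.1 k
    · intro k h
      simpa only [if_neg h] using hbox.2 k
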